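/- Let p and q be positive integers and let τ ∈ S_ann-nc(p,q) be such that τ(p) = p+1. Then τ ∈ S_disc-nc(p+q). -/

import Mathlib

/-- The permutation induced by `f` on the subset `B`: an element `b` is sent to the first
element of the sequence `f b, f (f b), f (f (f b)), ...` that lies in `B`
(and is left fixed if no iterate ever returns to `B`). -/
noncomputable def induced {α : Type*} (f : α → α) (B : Set α) (b : α) : α := by
  classical
  exact if h : ∃ k, 0 < k ∧ f^[k] b ∈ B then f^[Nat.find h] b else b

/-- `A` is an orbit of the permutation `τ`. -/
def IsOrbit {α : Type*} (τ : Equiv.Perm α) (A : Set α) : Prop :=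
  ∃ a, A = {b | τ.SameCycle a b}

/-- The number of orbits of `τ` (fixed points count as orbits). -/
noncomputable def numOrbits {α : Type*} (τ : Equiv.Perm α) : ℕ :=
  Set.ncard {A : Set α | IsOrbit τ A}

/-- `induced f S` acts on `a, b, c` as the 3-cycle `(a, b, c)`. -/
def MapsCyc3 {α : Type*} (f : α → α) (S : Set α) (a b c : α) : Prop :=
  induced f S a = b ∧ induced f S b = c ∧ induced f S c = a

/-- `induced f S` acts on `a, b, c, d` as the 4-cycle `(a, b, c, d)`. -/
def MapsCyc4 {α : Type*} (f : α → α) (S : Set α) (a b c d : α) : Prop :=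
  induced f S a = b ∧ induced f S b = c ∧ induced f S c = d ∧ induced f S d = a

/-- `induced f S` acts on `a, b, c, d` as the product of transpositions `(a, c)(b, d)`. -/
def MapsSwap2 {α : Type*} (f : α → α) (S : Set α) (a b c d : α) : Prop :=
  induced f S a = c ∧ induced f S c = a ∧ induced f S b = d ∧ induced f S d = b

/-- `induced f S` acts on `x, y` as the transposition `(x, y)`. -/
def MapsSwap {α : Type*} (f : α → α) (S : Set α) (x y : α) : Prop :=
  induced f S x = y ∧ induced f S y = x

/-- `σ` is standard with respect to the "forward cycle" `γ₀`, i.e. `σ∣B = γ₀∣B` for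
every orbit `B` of `σ`. -/
def DiscStandardRel {n : ℕ} (γ₀ σ : Equiv.Perm (Fin n)) : Prop :=
  ∀ A : Set (Fin n), IsOrbit σ A → ∀ b ∈ A, induced (⇑σ) A b = induced (⇑γ₀) A b

/-- The orbit partition of `σ` has no crossing: there are no `a < b < c < d` with
`a, c` in one orbit and `b, d` in a different orbit. -/
def OrbitsNoCrossing {n : ℕ} (σ : Equiv.Perm (Fin n)) : Prop :=
  ¬ ∃ a b c d : Fin n, a < b ∧ b < c ∧ c < d ∧
      σ.SameCycle a c ∧ σ.SameCycle b d ∧ ¬ σ.SameCycle a b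

/-- Disc non-crossing relative to a given forward cycle `γ₀`. -/
def DiscNCRel {n : ℕ} (γ₀ σ : Equiv.Perm (Fin n)) : Prop :=
  DiscStandardRel γ₀ σ ∧ OrbitsNoCrossing σ

/-- The set `S_disc-nc(n)` of disc non-crossing permutations of `[n]`
(here `[n] = {1, …, n}` is modelled by `Fin n`, and the forward cycle
`γ₀ = (1, 2, …, n)` is `finRotate n`). -/
def DiscNC {n : ℕ} (σ : Equiv.Perm (Fin n)) : Prop :=
  DiscNCRel (finRotate n) σ

/-- The external points `{1, …, p}` (0-indexed: values `< p`). -/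
def extSet (p q : ℕ) : Set (Fin (p + q)) := {i | (i : ℕ) < p}

/-- The internal points `{p+1, …, p+q}` (0-indexed: values `≥ p`). -/
def intSet (p q : ℕ) : Set (Fin (p + q)) := {i | p ≤ (i : ℕ)}

/-- `γ_ext = (1, 2, …, p)`, the forward cycle on the external points. -/
def gammaExt (p q : ℕ) : Equiv.Perm (Fin (p + q)) :=
  ((List.finRange (p + q)).take p).formPerm

/-- `γ_int = (p+1, p+2, …, p+q)`, the forward cycle on the internal points. -/
def gammaInt (p q : ℕ) : Equiv.Perm (Fin (p + q)) :=
  ((List.finRange (p + q)).drop p).formPerm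

/-- `γ = γ_ext · γ_int`. -/
def gammaAnn (p q : ℕ) : Equiv.Perm (Fin (p + q)) := gammaExt p q * gammaInt p q

/-- `λ_{x,y}`: the permutation fixing `x` and `y` and cycling the remaining points as
`(γ_ext(x), γ_ext²(x), …, γ_ext^{p-1}(x), γ_int(y), γ_int²(y), …, γ_int^{q-1}(y))`. -/
def lamPerm (p q : ℕ) (x y : Fin (p + q)) : Equiv.Perm (Fin (p + q)) :=
  (((List.range (p - 1)).map fun k => (gammaExt p q ^ (k + 1)) x) ++
    ((List.range (q - 1)).map fun k => (gammaInt p q ^ (k + 1)) y)).formPerm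

/-- `τ` is standard in `(p,q)`-annular sense. -/
def AnnStandard (p q : ℕ) (τ : Equiv.Perm (Fin (p + q))) : Prop :=
  (∀ A : Set (Fin (p + q)), IsOrbit τ A →
    (∀ b ∈ A ∩ extSet p q,
        induced (⇑τ) (A ∩ extSet p q) b = induced (⇑(gammaExt p q)) (A ∩ extSet p q) b) ∧
    (∀ b ∈ A ∩ intSet p q,
        induced (⇑τ) (A ∩ intSet p q) b = induced (⇑(gammaInt p q)) (A ∩ intSet p q) b)) ∧
  (∀ A : Set (Fin (p + q)), IsOrbit τ A →
    (A ∩ extSet p q).Nonempty → (A ∩ intSet p q).Nonempty →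
    (∃! a, a ∈ A ∩ extSet p q ∧ τ a ∈ intSet p q) ∧
    (∃! a, a ∈ A ∩ intSet p q ∧ τ a ∈ extSet p q))

/-- The annular crossing pattern (AC-1). -/
def AC1 (p q : ℕ) (τ : Equiv.Perm (Fin (p + q))) : Prop :=
  ∃ a b c d : Fin (p + q), List.Pairwise (· ≠ ·) [a, b, c, d] ∧
    MapsCyc4 (⇑(gammaAnn p q)) {a, b, c, d} a b c d ∧
    MapsSwap2 (⇑τ) {a, b, c, d} a b c d

/-- The annular crossing pattern (AC-2). -/
def AC2 (p q : ℕ) (τ : Equiv.Perm (Fin (p + q))) : Prop :=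
  ∃ a b c x y : Fin (p + q), List.Pairwise (· ≠ ·) [a, b, c, x, y] ∧
    x ∈ extSet p q ∧ y ∈ intSet p q ∧
    MapsCyc3 (⇑(lamPerm p q x y)) {a, b, c} a b c ∧
    MapsCyc3 (⇑τ) {a, b, c, x, y} a c b ∧
    MapsSwap (⇑τ) {a, b, c, x, y} x y

/-- The annular crossing pattern (AC-3). -/
def AC3 (p q : ℕ) (τ : Equiv.Perm (Fin (p + q))) : Prop :=
  ∃ a b c d x y : Fin (p + q), List.Pairwise (· ≠ ·) [a, b, c, d, x, y] ∧
    x ∈ extSet p q ∧ y ∈ intSet p q ∧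
    MapsCyc4 (⇑(lamPerm p q x y)) {a, b, c, d} a b c d ∧
    MapsSwap2 (⇑τ) {a, b, c, d, x, y} a b c d ∧
    MapsSwap (⇑τ) {a, b, c, d, x, y} x y

/-- The set `S_ann-nc(p,q)` of `(p,q)`-annular non-crossing permutations. -/
def AnnNC (p q : ℕ) (τ : Equiv.Perm (Fin (p + q))) : Prop :=
  AnnStandard p q τ ∧ ¬ AC1 p q τ ∧ ¬ AC2 p q τ ∧ ¬ AC3 p q τ

/-- A `(p,q)`-connecting set: meets both the external and internal points. -/
def ConnectingBlock (p q : ℕ) (B : Set (Fin (p + q))) : Prop :=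
  (B ∩ extSet p q).Nonempty ∧ (B ∩ intSet p q).Nonempty

/-- `τ` is `(p,q)`-connected: it has a `(p,q)`-connecting orbit. -/
def AnnConnected (p q : ℕ) (τ : Equiv.Perm (Fin (p + q))) : Prop :=
  ∃ A : Set (Fin (p + q)), IsOrbit τ A ∧ ConnectingBlock p q A

/-- A family of blocks has no crossing: no `a < b < c < d` with `a, c` in one block and
`b, d` in a different block. -/
def NoCrossing {n : ℕ} (ρ : Set (Set (Fin n))) : Prop :=
  ¬ ∃ (a b c d : Fin n) (B C : Set (Fin n)), B ∈ ρ ∧ C ∈ ρ ∧ B ≠ C ∧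
      a < b ∧ b < c ∧ c < d ∧ a ∈ B ∧ c ∈ B ∧ b ∈ C ∧ d ∈ C

/-!
Write `P = p` and `Q = p + 1 = τ P`, so that `λ_{P,Q}` runs through the other points in increasing
order. If another orbit left the external circle at `a` and had a point `m` strictly between `a`
and `τ a`, then `a < m < τ a` together with `P, Q` would be an (AC-2). So every connecting orbit
leaves at its largest external point and enters at its smallest internal point, which glues its two
cyclic orders to the cyclic order of `[p + q]`.

A disc crossing that does not involve the orbit of `P` is an (AC-3) with `x = P` and `y = Q`.
Otherwise the other orbit contains `u < v` such that `]u, v[` contains a point of the orbit of `P`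
and `[u, v]` misses another one, `z`. If `u` and `v` lie on the same circle, this is an (AC-1)
in which `P` or `Q` plays the role of `z`; if not, it is an (AC-2) with `x = u`, `y = v` and the
three points `P, z, Q`.
-/

section Induced

variable {α : Type*} {f g : α → α} {B S T : Set α} {a b c : α}

theorem induced_eq_iterate {k : ℕ} (hk : 0 < k) (hB : f^[k] b ∈ B)
    (hmin : ∀ j, 0 < j → j < k → f^[j] b ∉ B) : induced f B b = f^[k] b := by
  classical
  have hex : ∃ k, 0 < k ∧ f^[k] b ∈ B := ⟨k, hk, hB⟩
  have hfind : Nat.find hex = k :=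
    (Nat.find_eq_iff hex).2 ⟨⟨hk, hB⟩, fun j hj h => hmin j h.1 hj h.2⟩
  rw [induced, dif_pos hex, hfind]

theorem induced_eq_apply (h : f b ∈ B) : induced f B b = f b :=
  induced_eq_iterate one_pos h (by intros; omega)

theorem induced_mem (hb : b ∈ B) : induced f B b ∈ B := by
  classical
  rw [induced]
  split_ifs with h
  exacts [(Nat.find_spec h).2, hb]

theorem induced_congr (hT : Set.MapsTo f T T) (hfg : Set.EqOn f g T) (hb : b ∈ T) :
    induced f B b = induced g B b := by
  classical
  have hiter : ∀ k, f^[k] b = g^[k] b := by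
    intro k
    induction k with
    | zero => rfl
    | succ k ih =>
      rw [Function.iterate_succ_apply', Function.iterate_succ_apply', ← ih, hfg (hT.iterate k hb)]
  by_cases hex : ∃ k, 0 < k ∧ g^[k] b ∈ B
  · obtain ⟨hpos, hmem⟩ := Nat.find_spec hex
    have hmin : ∀ j, 0 < j → j < Nat.find hex → g^[j] b ∉ B :=
      fun j hj0 hj hjB => Nat.find_min hex hj ⟨hj0, hjB⟩
    rw [induced_eq_iterate hpos hmem hmin, ← hiter]
    exact induced_eq_iterate hpos (by rwa [hiter]) fun j hj0 hj => by
      rw [hiter]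
      exact hmin j hj0 hj
  · simp only [induced, hiter, dif_neg hex]

theorem sameCycle_iterate (τ : Equiv.Perm α) (k : ℕ) (b : α) : τ.SameCycle b (τ^[k] b) :=
  ⟨k, by rw [zpow_natCast, Equiv.Perm.coe_pow]⟩

variable [Finite α] {τ : Equiv.Perm α}

theorem exists_induced_eq_iterate (τ : Equiv.Perm α) (hb : b ∈ B) :
    ∃ k, 0 < k ∧ induced τ B b = τ^[k] b ∧ ∀ j, 0 < j → j < k → τ^[j] b ∉ B := by
  classical
  have hex : ∃ k, 0 < k ∧ τ^[k] b ∈ B := by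
    refine ⟨orderOf τ, orderOf_pos τ, ?_⟩
    rwa [← Equiv.Perm.coe_pow, pow_orderOf_eq_one]
  have hfirst : ∀ j, 0 < j → j < Nat.find hex → τ^[j] b ∉ B :=
    fun j h0 hj hm => Nat.find_min hex hj ⟨h0, hm⟩
  obtain ⟨hpos, hmem⟩ := Nat.find_spec hex
  exact ⟨_, hpos, induced_eq_iterate hpos hmem hfirst, hfirst⟩

theorem sameCycle_induced (hb : b ∈ B) : τ.SameCycle b (induced τ B b) := by
  obtain ⟨k, -, hk, -⟩ := exists_induced_eq_iterate τ hb
  exact hk ▸ sameCycle_iterate τ k b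

theorem induced_injOn : Set.InjOn (induced τ S) S := by
  intro a ha b hb hab
  obtain ⟨k, hk0, hk, hkmin⟩ := exists_induced_eq_iterate τ ha
  obtain ⟨m, hm0, hm, hmmin⟩ := exists_induced_eq_iterate τ hb
  rw [hk, hm] at hab
  rcases lt_trichotomy k m with hkm | rfl | hkm
  · rw [← Nat.add_sub_of_le hkm.le, Function.iterate_add_apply] at hab
    exact absurd (τ.injective.iterate k hab ▸ ha) (hmmin (m - k) (by omega) (by omega))
  · exact τ.injective.iterate k hab
  · rw [← Nat.add_sub_of_le hkm.le, Function.iterate_add_apply] at hab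
    exact absurd (τ.injective.iterate m hab ▸ hb) (hkmin (k - m) (by omega) (by omega))

theorem induced_ne_self (ha : a ∈ S) (hc : c ∈ S) (hac : τ.SameCycle a c) (hne : a ≠ c) :
    induced τ S a ≠ a := by
  intro hfix
  obtain ⟨k, hk0, hk, hkmin⟩ := exists_induced_eq_iterate τ ha
  obtain ⟨n, rfl⟩ := hac.exists_nat_pow_eq
  have hmod : τ^[n % k] a = τ^[n] a :=
    Function.IsPeriodicPt.iterate_mod_apply (hk.symm.trans hfix) n
  rw [Equiv.Perm.coe_pow, ← hmod] at hc hne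
  rcases Nat.eq_zero_or_pos (n % k) with h0 | h0
  · exact hne (by rw [h0, Function.iterate_zero_apply])
  · exact hkmin _ h0 (Nat.mod_lt _ hk0) hc

theorem mapsSwap_of_sameCycle (ha : a ∈ S) (hc : c ∈ S) (hne : a ≠ c) (hac : τ.SameCycle a c)
    (hS : ∀ s ∈ S, τ.SameCycle a s → s = a ∨ s = c) : MapsSwap τ S a c := by
  have hac' := induced_ne_self ha hc hac hne
  have hca' := induced_ne_self hc ha hac.symm hne.symm
  exact ⟨(hS _ (induced_mem ha) (sameCycle_induced ha)).resolve_left hac',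
    (hS _ (induced_mem hc) (hac.trans (sameCycle_induced hc))).resolve_right hca'⟩

theorem mapsCyc3_of_sameCycle (ha : a ∈ S) (hb : b ∈ S) (hc : c ∈ S) (hne : [a, b, c].Nodup)
    (hab : τ.SameCycle a b) (hbc : τ.SameCycle b c)
    (hS : ∀ s ∈ S, τ.SameCycle a s → s = a ∨ s = b ∨ s = c) (h : induced τ S a = b) :
    MapsCyc3 τ S a b c := by
  have himage_b := hS _ (induced_mem hb) (hab.trans (sameCycle_induced hb))
  have himage_c := hS _ (induced_mem hc) ((hab.trans hbc).trans (sameCycle_induced hc))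
  have hb_moved : induced τ S b ≠ b := induced_ne_self hb hc hbc (by grind)
  have hc_moved : induced τ S c ≠ c := induced_ne_self hc hb hbc.symm (by grind)
  have hinj_ac := induced_injOn (τ := τ).ne ha hc (by grind)
  have hinj_bc := induced_injOn (τ := τ).ne hb hc (by grind)
  exact ⟨h, by grind, by grind⟩

theorem exists_induced_eq_apply_of_apply_notMem (ha : a ∈ S) (hS : τ a ∉ S) :
    ∃ d ∉ S, τ.SameCycle a d ∧ τ d ∈ S ∧ induced τ S a = τ d := by
  obtain ⟨k, hk0, hk, hkmin⟩ := exists_induced_eq_iterate τ ha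
  have hk1 : k ≠ 1 := by
    rintro rfl
    exact hS (hk ▸ induced_mem ha : τ^[1] a ∈ S)
  have hstep : τ (τ^[k - 1] a) = τ^[k] a := by
    rw [← Function.iterate_succ_apply' τ, Nat.succ_eq_add_one, Nat.sub_add_cancel hk0]
  exact ⟨τ^[k - 1] a, hkmin _ (by omega) (by omega), sameCycle_iterate τ _ a,
    hstep ▸ hk ▸ induced_mem ha, hstep ▸ hk⟩

end Induced

section FormPerm

variable {α : Type*} [DecidableEq α] {l l' u v : List α} {a b c d : α}

theorem formPerm_append_cons_eq (h : (u ++ b :: v).Nodup) :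
    (u ++ b :: v).formPerm = (b :: (v ++ u)).formPerm :=
  List.formPerm_eq_of_isRotated h List.isRotated_append

theorem induced_formPerm_cons_of_sublist (hl : (b :: v).Nodup) (h : u.Sublist v) :
    induced (b :: v).formPerm {x | x ∈ b :: u} b = (b :: u).formPerm b := by
  rcases u with - | ⟨c, u⟩
  · simpa using induced_mem (f := (b :: v).formPerm) (Set.mem_singleton b)
  obtain ⟨r, r', rfl, hc, hu⟩ := List.cons_sublist_iff.1 h
  obtain ⟨s, t, rfl⟩ := List.append_of_mem hc
  have hiter : ∀ k (hk : k < (b :: (s ++ c :: t ++ r')).length),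
      (b :: (s ++ c :: t ++ r')).formPerm^[k] b = (b :: (s ++ c :: t ++ r'))[k] := by
    intro k hk
    rw [← Equiv.Perm.coe_pow, List.formPerm_pow_apply_head _ _ hl]
    simp only [Nat.mod_eq_of_lt hk]
  have hreturn : (b :: (s ++ c :: t ++ r')).formPerm^[s.length + 1] b = c := by
    rw [hiter _ (by simp)]
    simp
  have hskip : ∀ x ∈ s, x ∉ b :: c :: u := by
    have := hu.subset
    grind
  rw [List.formPerm_apply_head _ _ _ (hl.sublist (h.cons_cons b)),
    induced_eq_iterate (k := s.length + 1) (Nat.succ_pos _) (by rw [hreturn]; simp) ?_, hreturn]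
  intro j hj0 hj
  obtain ⟨i, rfl⟩ := Nat.exists_eq_add_of_le' hj0
  have hi : i < s.length := by omega
  rw [hiter (i + 1) (by simp; omega)]
  simp only [List.getElem_cons_succ, List.append_assoc, List.getElem_append_left hi]
  exact hskip _ (List.getElem_mem hi)

theorem induced_formPerm_of_sublist (hl : l.Nodup) (h : l'.Sublist l) (hb : b ∈ l') :
    induced l.formPerm {x | x ∈ l'} b = l'.formPerm b := by
  obtain ⟨u', v', rfl⟩ := List.append_of_mem hb
  obtain ⟨u, w, rfl, hu, hw⟩ := List.append_sublist_iff.1 h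
  obtain ⟨r, v, rfl, hbr, hv⟩ := List.cons_sublist_iff.1 hw
  obtain ⟨s, t, rfl⟩ := List.append_of_mem hbr
  have hl' := hl.sublist h
  simp only [List.append_assoc, List.cons_append] at hl ⊢
  rw [← List.append_assoc] at hl ⊢
  have hsub : (v' ++ u').Sublist ((t ++ v) ++ (u ++ s)) :=
    (List.sublist_append_of_sublist_right hv).append (List.sublist_append_of_sublist_left hu)
  have hset : {x | x ∈ u' ++ b :: v'} = {x | x ∈ b :: (v' ++ u')} := by
    ext x
    simp [or_comm, or_left_comm]
  rw [formPerm_append_cons_eq hl, formPerm_append_cons_eq hl', hset]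
  refine induced_formPerm_cons_of_sublist ?_ hsub
  exact (List.IsRotated.nodup_iff List.isRotated_append).1 hl

theorem mapsCyc3_formPerm (hl : l.Nodup) (h : [a, b, c].Sublist l) :
    MapsCyc3 l.formPerm {a, b, c} a b c := by
  have hnodup := hl.sublist h
  have hset : ({a, b, c} : Set α) = {x | x ∈ [a, b, c]} := by ext; simp
  rw [MapsCyc3, hset]
  simp only [List.nodup_cons, List.mem_cons, List.not_mem_nil, not_or, or_false] at hnodup
  refine ⟨?_, ?_, ?_⟩ <;> rw [induced_formPerm_of_sublist hl h (by simp)] <;>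
    grind [List.formPerm_cons_cons, List.formPerm_singleton, Equiv.Perm.mul_apply,
      Equiv.Perm.one_apply]

theorem mapsCyc4_formPerm (hl : l.Nodup) (h : [a, b, c, d].Sublist l) :
    MapsCyc4 l.formPerm {a, b, c, d} a b c d := by
  have hnodup := hl.sublist h
  have hset : ({a, b, c, d} : Set α) = {x | x ∈ [a, b, c, d]} := by ext; simp
  rw [MapsCyc4, hset]
  simp only [List.nodup_cons, List.mem_cons, List.not_mem_nil, not_or, or_false] at hnodup
  refine ⟨?_, ?_, ?_, ?_⟩ <;> rw [induced_formPerm_of_sublist hl h (by simp)] <;>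
    grind [List.formPerm_cons_cons, List.formPerm_singleton, Equiv.Perm.mul_apply,
      Equiv.Perm.one_apply]

theorem map_pow_formPerm_apply (h : (u ++ b :: v).Nodup) :
    (List.range ((u ++ b :: v).length - 1)).map (fun k => ((u ++ b :: v).formPerm ^ (k + 1)) b) =
      v ++ u := by
  have hrot : (b :: (v ++ u)).Nodup := (List.IsRotated.nodup_iff List.isRotated_append).1 h
  rw [formPerm_append_cons_eq h]
  refine List.ext_getElem (by simp; omega) fun i hi hi' => ?_
  rw [List.getElem_map, List.getElem_range, List.formPerm_pow_apply_head _ _ hrot]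
  simp only [Nat.mod_eq_of_lt (show i + 1 < (b :: (v ++ u)).length by simpa using hi'),
    List.getElem_cons_succ]

end FormPerm

section CyclicSucc

variable {α : Type*} [LinearOrder α] {S : Set α} {l l' u v : List α} {b c c' : α}

/-- `c` follows `b` in the cyclic order of `S`: it is the next element of `S` above `b`, or
`b` is the greatest and `c` the least element of `S`. -/
def CyclicSucc (S : Set α) (b c : α) : Prop :=
  (b ∈ S ∧ c ∈ S ∧ b < c ∧ ∀ s ∈ S, s ≤ b ∨ c ≤ s) ∨ (IsGreatest S b ∧ IsLeast S c)

theorem CyclicSucc.unique (h : CyclicSucc S b c) (h' : CyclicSucc S b c') : c = c' := by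
  rcases h with ⟨-, hc, hbc, hgap⟩ | ⟨hb, hc⟩ <;> rcases h' with ⟨-, hc', hbc', hgap'⟩ | ⟨hb', hc'⟩
  · exact le_antisymm ((hgap c' hc').resolve_left hbc'.not_ge)
      ((hgap' c hc).resolve_left hbc.not_ge)
  · exact absurd (hb'.2 hc) hbc.not_ge
  · exact absurd (hb.2 hc') hbc'.not_ge
  · exact hc.unique hc'

theorem CyclicSucc.isGreatest_of_isLeast (h : CyclicSucc S b c) (hc : IsLeast S c) :
    IsGreatest S b := by
  rcases h with ⟨hb, -, hbc, -⟩ | ⟨hb, -⟩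
  exacts [absurd (hc.2 hb) hbc.not_ge, hb]

theorem CyclicSucc.isLeast_of_isGreatest (h : CyclicSucc S b c) (hb : IsGreatest S b) :
    IsLeast S c := by
  rcases h with ⟨-, hc, hbc, -⟩ | ⟨-, hc⟩
  exacts [absurd (hb.2 hc) hbc.not_ge, hc]

theorem cyclicSucc_formPerm (hl : l.Pairwise (· < ·)) (hb : b ∈ l) :
    CyclicSucc {x | x ∈ l} b (l.formPerm b) := by
  obtain ⟨u, v, rfl⟩ := List.append_of_mem hb
  have hrot : (b :: (v ++ u)).Nodup :=
    (List.IsRotated.nodup_iff List.isRotated_append).1 hl.nodup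
  rw [formPerm_append_cons_eq hl.nodup]
  simp only [List.pairwise_append, List.pairwise_cons, List.mem_cons] at hl
  rcases v with - | ⟨c, v⟩
  · rcases u with - | ⟨c, u⟩
    · right
      simp [IsGreatest, IsLeast, upperBounds, lowerBounds]
    · rw [List.nil_append, List.formPerm_apply_head _ _ _ hrot]
      right
      simp only [List.pairwise_cons] at hl
      exact ⟨⟨by simp, fun s hs => by grind⟩, ⟨by simp, fun s hs => by grind⟩⟩
  · simp only [List.cons_append] at hrot ⊢
    rw [List.formPerm_apply_head _ _ _ hrot]
    left
    refine ⟨by simp, by simp, by grind, fun s hs => ?_⟩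
    simp only [List.pairwise_cons] at hl
    grind

theorem cyclicSucc_induced_formPerm (hl : l.Pairwise (· < ·)) (hS : S ⊆ {x | x ∈ l})
    (hb : b ∈ S) : CyclicSucc S b (induced l.formPerm S b) := by
  classical
  have hset : S = {x | x ∈ l.filter (· ∈ S)} := by
    ext x
    simpa using @hS x
  have hbl : b ∈ l.filter (· ∈ S) := by rwa [hset] at hb
  have hsub : (l.filter (· ∈ S)).Sublist l := List.filter_sublist
  have hsucc := cyclicSucc_formPerm (hl.sublist hsub) hbl
  rwa [← induced_formPerm_of_sublist hl.nodup hsub hbl, ← hset] at hsucc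

theorem sublist_of_subset_of_pairwise_lt (hl' : l'.Pairwise (· < ·)) (hl : l.Pairwise (· < ·))
    (h : l' ⊆ l) : l'.Sublist l :=
  List.sublist_of_subperm_of_pairwise (List.subperm_of_subset hl'.nodup h) hl' hl

theorem mem_left_iff_lt_of_pairwise_lt (h : (u ++ b :: v).Pairwise (· < ·))
    (hc : c ∈ u ++ b :: v) : c ∈ u ↔ c < b := by
  simp only [List.pairwise_append, List.pairwise_cons, List.mem_append, List.mem_cons] at h hc
  grind

theorem mem_right_iff_lt_of_pairwise_lt (h : (u ++ b :: v).Pairwise (· < ·))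
    (hc : c ∈ u ++ b :: v) : c ∈ v ↔ b < c := by
  simp only [List.pairwise_append, List.pairwise_cons, List.mem_append, List.mem_cons] at h hc
  have hu : ∀ s ∈ u, s < b := fun s hs => h.2.2 s hs b (Or.inl rfl)
  grind

end CyclicSucc

theorem finRotate_eq_formPerm_finRange (n : ℕ) : finRotate n = (List.finRange n).formPerm := by
  ext i
  have hi : (List.finRange n)[(i : ℕ)]'(by simp) = i := by simp
  have happly := List.formPerm_apply_getElem _ (List.nodup_finRange n) i (by simp)
  rw [hi] at happly
  have : NeZero n := ⟨i.pos.ne'⟩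
  simp [happly, Fin.val_add]

section Annulus

variable {p q : ℕ} {x y b : Fin (p + q)} {B : Set (Fin (p + q))}
  {s t s' t' l : List (Fin (p + q))}

/-- The external points in increasing order, so that `γ_ext` is the cycle along this list. -/
def extList (p q : ℕ) : List (Fin (p + q)) := (List.finRange (p + q)).take p

/-- The internal points in increasing order, so that `γ_int` is the cycle along this list. -/
def intList (p q : ℕ) : List (Fin (p + q)) := (List.finRange (p + q)).drop p

/-- The list of the points other than `x` and `y` along which `λ_{x,y}` cycles. -/
def lamList (p q : ℕ) (x y : Fin (p + q)) : List (Fin (p + q)) :=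
  ((List.range (p - 1)).map fun k => (gammaExt p q ^ (k + 1)) x) ++
    ((List.range (q - 1)).map fun k => (gammaInt p q ^ (k + 1)) y)

theorem extList_append_intList : extList p q ++ intList p q = List.finRange (p + q) :=
  List.take_append_drop ..

theorem pairwise_lt_extList : (extList p q).Pairwise (· < ·) :=
  (List.pairwise_lt_finRange _).take

theorem pairwise_lt_intList : (intList p q).Pairwise (· < ·) :=
  (List.pairwise_lt_finRange _).drop

theorem mem_intSet_iff_notMem_extSet : x ∈ intSet p q ↔ x ∉ extSet p q := by
  simp [intSet, extSet]

theorem mem_extSet_or_mem_intSet (x : Fin (p + q)) : x ∈ extSet p q ∨ x ∈ intSet p q := by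
  simpa [extSet, intSet] using lt_or_ge (x : ℕ) p

theorem mem_extSet_of_le (hy : y ∈ extSet p q) (hxy : x ≤ y) : x ∈ extSet p q :=
  lt_of_le_of_lt (Fin.le_def.1 hxy) hy

theorem mem_intSet_of_le (hx : x ∈ intSet p q) (hxy : x ≤ y) : y ∈ intSet p q :=
  le_trans hx (Fin.le_def.1 hxy)

theorem lt_of_mem_extSet_of_mem_intSet (hx : x ∈ extSet p q) (hy : y ∈ intSet p q) : x < y :=
  lt_of_lt_of_le (b := p) (by simpa [extSet] using hx) (by simpa [intSet] using hy)

theorem mem_extList : x ∈ extList p q ↔ x ∈ extSet p q := by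
  simp only [extList, List.mem_take_iff_getElem, List.getElem_finRange, List.length_finRange,
    extSet, Set.mem_ofPred_eq]
  constructor
  · rintro ⟨i, hi, rfl⟩
    exact (lt_min_iff.1 hi).1
  · exact fun hx => ⟨x, lt_min hx x.isLt, rfl⟩

theorem mem_intList : x ∈ intList p q ↔ x ∈ intSet p q := by
  have hmem : x ∈ extList p q ++ intList p q := by
    rw [extList_append_intList]
    exact List.mem_finRange x
  have hdisj : (extList p q ++ intList p q).Nodup := by
    rw [extList_append_intList]
    exact List.nodup_finRange _
  have hext := mem_extList (x := x)
  have hset := mem_intSet_iff_notMem_extSet (x := x)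
  grind

theorem gammaExt_apply_of_mem_intSet (hx : x ∈ intSet p q) : gammaExt p q x = x :=
  List.formPerm_apply_of_notMem fun h =>
    absurd (mem_extList.1 h) (mem_intSet_iff_notMem_extSet.1 hx)

theorem gammaInt_apply_of_mem_extSet (hx : x ∈ extSet p q) : gammaInt p q x = x :=
  List.formPerm_apply_of_notMem fun h =>
    absurd hx (mem_intSet_iff_notMem_extSet.1 (mem_intList.1 h))

theorem gammaExt_mem_extSet (hx : x ∈ extSet p q) : gammaExt p q x ∈ extSet p q :=
  mem_extList.1 (List.formPerm_apply_mem_of_mem (mem_extList.2 hx))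

theorem gammaInt_mem_intSet (hx : x ∈ intSet p q) : gammaInt p q x ∈ intSet p q :=
  mem_intList.1 (List.formPerm_apply_mem_of_mem (mem_intList.2 hx))

theorem induced_gammaAnn_of_mem_extSet (hb : b ∈ extSet p q) :
    induced (gammaAnn p q) B b = induced (gammaExt p q) B b :=
  (induced_congr (fun _ => gammaExt_mem_extSet)
    (fun x hx => by simp [gammaAnn, gammaInt_apply_of_mem_extSet hx]) hb).symm

theorem induced_gammaAnn_of_mem_intSet (hb : b ∈ intSet p q) :
    induced (gammaAnn p q) B b = induced (gammaInt p q) B b :=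
  (induced_congr (fun _ => gammaInt_mem_intSet)
    (fun x hx => by
      simp [gammaAnn, gammaExt_apply_of_mem_intSet (gammaInt_mem_intSet hx)]) hb).symm

theorem lamList_eq (hx : extList p q = s ++ x :: t) (hy : intList p q = s' ++ y :: t') :
    lamList p q x y = (t ++ s) ++ (t' ++ s') := by
  have hp : (s ++ x :: t).length = p := by simp [← hx, extList]
  have hq : (s' ++ y :: t').length = q := by simp [← hy, intList]
  have hrot_ext := map_pow_formPerm_apply (hx ▸ pairwise_lt_extList.nodup)
  have hrot_int := map_pow_formPerm_apply (hy ▸ pairwise_lt_intList.nodup)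
  rw [hp, ← hx] at hrot_ext
  rw [hq, ← hy] at hrot_int
  exact congrArg₂ _ hrot_ext hrot_int

theorem nodup_lamList (hx : x ∈ extSet p q) (hy : y ∈ intSet p q) : (lamList p q x y).Nodup := by
  obtain ⟨s, t, hs⟩ := List.append_of_mem (mem_extList.2 hx)
  obtain ⟨s', t', hs'⟩ := List.append_of_mem (mem_intList.2 hy)
  have hnodup := List.nodup_finRange (p + q)
  rw [← extList_append_intList, hs, hs'] at hnodup
  rw [lamList_eq hs hs']
  grind

section CrossingPatterns

variable {τ : Equiv.Perm (Fin (p + q))} {a c d : Fin (p + q)}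

theorem mapsCyc4_gammaAnn (hside : [a, b, c, d].Sublist (extList p q) ∨
      [a, b, c, d].Sublist (intList p q)) :
    MapsCyc4 (gammaAnn p q) {a, b, c, d} a b c d := by
  rcases hside with h | h
  · have hmem : ∀ z ∈ [a, b, c, d], z ∈ extSet p q := fun z hz => mem_extList.1 (h.subset hz)
    have hcyc : MapsCyc4 (gammaExt p q) {a, b, c, d} a b c d :=
      mapsCyc4_formPerm pairwise_lt_extList.nodup h
    simp only [List.forall_mem_cons] at hmem
    simpa only [MapsCyc4, induced_gammaAnn_of_mem_extSet, hmem] using hcyc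
  · have hmem : ∀ z ∈ [a, b, c, d], z ∈ intSet p q := fun z hz => mem_intList.1 (h.subset hz)
    have hcyc : MapsCyc4 (gammaInt p q) {a, b, c, d} a b c d :=
      mapsCyc4_formPerm pairwise_lt_intList.nodup h
    simp only [List.forall_mem_cons] at hmem
    simpa only [MapsCyc4, induced_gammaAnn_of_mem_intSet, hmem] using hcyc

theorem mapsSwap2_of_mapsSwap {S : Set (Fin (p + q))} (hac : MapsSwap τ S a c)
    (hbd : MapsSwap τ S b d) : MapsSwap2 τ S a b c d :=
  ⟨hac.1, hac.2, hbd.1, hbd.2⟩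

theorem sameCycle_iff_quotientMk_eq {u v : Fin (p + q)} : τ.SameCycle u v ↔
    Quotient.mk (Equiv.Perm.SameCycle.setoid τ) u = Quotient.mk _ v :=
  (Quotient.eq (r := Equiv.Perm.SameCycle.setoid τ)).symm

theorem AC1.of_lt (hside : d ∈ extSet p q ∨ a ∈ intSet p q) (hab : a < b) (hbc : b < c)
    (hcd : c < d) (hac : τ.SameCycle a c) (hbd : τ.SameCycle b d) (hnab : ¬ τ.SameCycle a b) :
    AC1 p q τ := by
  have hlt : [a, b, c, d].Pairwise (· < ·) := by grind
  have hsub : [a, b, c, d].Sublist (extList p q) ∨ [a, b, c, d].Sublist (intList p q) :=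
    hside.imp
      (fun hd => sublist_of_subset_of_pairwise_lt hlt pairwise_lt_extList fun _ hz =>
        mem_extList.2 (mem_extSet_of_le hd (by grind)))
      (fun ha => sublist_of_subset_of_pairwise_lt hlt pairwise_lt_intList fun _ hz =>
        mem_intList.2 (mem_intSet_of_le ha (by grind)))
  refine ⟨a, b, c, d, hlt.nodup, mapsCyc4_gammaAnn hsub, mapsSwap2_of_mapsSwap ?_ ?_⟩ <;>
    refine mapsSwap_of_sameCycle (by simp) (by simp) (by grind) (by assumption) ?_ <;>
    simp only [sameCycle_iff_quotientMk_eq] at * <;> grind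

theorem nodup_append_pair (hl : l.Nodup) (hxy_ne : x ≠ y) (hxy : τ.SameCycle x y)
    (hxl : ∀ z ∈ l, ¬ τ.SameCycle x z) : (l ++ [x, y]).Nodup := by
  have hdisj : ∀ z ∈ l, z ≠ x ∧ z ≠ y := fun z hz =>
    ⟨fun hzx => hxl z hz (hzx ▸ Equiv.Perm.SameCycle.refl τ x), fun hzy => hxl z hz (hzy ▸ hxy)⟩
  refine List.nodup_append.2 ⟨hl, by simpa using hxy_ne, fun z hz w hw => ?_⟩
  rcases List.mem_pair.1 hw with rfl | rfl
  exacts [(hdisj z hz).1, (hdisj z hz).2]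

theorem AC2.of_sublist (hx : x ∈ extSet p q) (hy : y ∈ intSet p q)
    (h : [a, b, c].Sublist (lamList p q x y)) (hxy : τ.SameCycle x y) (hab : τ.SameCycle a b)
    (hac : τ a = c) (hxa : ¬ τ.SameCycle x a) : AC2 p q τ := by
  have hne : [a, b, c].Nodup := h.nodup (nodup_lamList hx hy)
  have hlam : MapsCyc3 (lamPerm p q x y) {a, b, c} a b c :=
    mapsCyc3_formPerm (nodup_lamList hx hy) h
  have hxy_ne : x ≠ y := (lt_of_mem_extSet_of_mem_intSet hx hy).ne
  have hac' : τ.SameCycle a c := ⟨1, by simpa using hac⟩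
  clear h
  refine ⟨a, b, c, x, y, nodup_append_pair hne hxy_ne hxy ?_, hx, hy, hlam,
    mapsCyc3_of_sameCycle (by simp) (by simp) (by simp) (by grind) hac' (hac'.symm.trans hab) ?_
      (hac ▸ induced_eq_apply (by simp [hac])),
    mapsSwap_of_sameCycle (by simp) (by simp) hxy_ne hxy ?_⟩ <;>
    clear hlam <;> simp only [sameCycle_iff_quotientMk_eq] at * <;> grind

theorem AC3.of_sublist (hx : x ∈ extSet p q) (hy : y ∈ intSet p q)
    (h : [a, b, c, d].Sublist (lamList p q x y)) (hxy : τ.SameCycle x y)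
    (hac : τ.SameCycle a c) (hbd : τ.SameCycle b d) (hab : ¬ τ.SameCycle a b)
    (hxa : ¬ τ.SameCycle x a) (hxb : ¬ τ.SameCycle x b) : AC3 p q τ := by
  have hne : [a, b, c, d].Nodup := h.nodup (nodup_lamList hx hy)
  have hlam : MapsCyc4 (lamPerm p q x y) {a, b, c, d} a b c d :=
    mapsCyc4_formPerm (nodup_lamList hx hy) h
  have hxy_ne : x ≠ y := (lt_of_mem_extSet_of_mem_intSet hx hy).ne
  clear h
  refine ⟨a, b, c, d, x, y, nodup_append_pair hne hxy_ne hxy ?_, hx, hy, hlam,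
    mapsSwap2_of_mapsSwap
      (mapsSwap_of_sameCycle (by simp) (by simp) (by grind) hac ?_)
      (mapsSwap_of_sameCycle (by simp) (by simp) (by grind) hbd ?_),
    mapsSwap_of_sameCycle (by simp) (by simp) hxy_ne hxy ?_⟩ <;>
    clear hlam hne <;> simp only [sameCycle_iff_quotientMk_eq] at * <;> grind

end CrossingPatterns

theorem IsOrbit.mem_iff {α : Type*} {τ : Equiv.Perm α} {A : Set α} {a m : α} (hA : IsOrbit τ A)
    (ha : a ∈ A) : m ∈ A ↔ τ.SameCycle a m := by
  obtain ⟨c, rfl⟩ := hA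
  exact ⟨fun hm => Equiv.Perm.SameCycle.trans (Equiv.Perm.SameCycle.symm ha) hm,
    fun hm => Equiv.Perm.SameCycle.trans ha hm⟩

section Standard

variable {τ : Equiv.Perm (Fin (p + q))} {A : Set (Fin (p + q))} {a d e : Fin (p + q)}

theorem AnnStandard.cyclicSucc_induced_ext (h : AnnStandard p q τ) (hA : IsOrbit τ A)
    (hb : b ∈ A ∩ extSet p q) :
    CyclicSucc (A ∩ extSet p q) b (induced τ (A ∩ extSet p q) b) := by
  rw [(h.1 A hA).1 b hb]
  exact cyclicSucc_induced_formPerm pairwise_lt_extList (fun x hx => mem_extList.2 hx.2) hb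

theorem AnnStandard.cyclicSucc_induced_int (h : AnnStandard p q τ) (hA : IsOrbit τ A)
    (hb : b ∈ A ∩ intSet p q) :
    CyclicSucc (A ∩ intSet p q) b (induced τ (A ∩ intSet p q) b) := by
  rw [(h.1 A hA).2 b hb]
  exact cyclicSucc_induced_formPerm pairwise_lt_intList (fun x hx => mem_intList.2 hx.2) hb

theorem AnnStandard.exit_unique (h : AnnStandard p q τ) (ha : a ∈ extSet p q)
    (ha' : τ a ∈ intSet p q) (hb : b ∈ extSet p q) (hb' : τ b ∈ intSet p q)
    (hab : τ.SameCycle a b) : a = b :=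
  (h.2 {m | τ.SameCycle a m} ⟨a, rfl⟩ ⟨a, Equiv.Perm.SameCycle.refl τ a, ha⟩
    ⟨τ a, ⟨1, by simp⟩, ha'⟩).1.unique ⟨⟨Equiv.Perm.SameCycle.refl τ a, ha⟩, ha'⟩ ⟨⟨hab, hb⟩, hb'⟩

theorem AnnStandard.entry_unique (h : AnnStandard p q τ) (ha : a ∈ intSet p q)
    (ha' : τ a ∈ extSet p q) (hb : b ∈ intSet p q) (hb' : τ b ∈ extSet p q)
    (hab : τ.SameCycle a b) : a = b :=
  (h.2 {m | τ.SameCycle a m} ⟨a, rfl⟩ ⟨τ a, ⟨1, by simp⟩, ha'⟩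
    ⟨a, Equiv.Perm.SameCycle.refl τ a, ha⟩).2.unique
      ⟨⟨Equiv.Perm.SameCycle.refl τ a, ha⟩, ha'⟩ ⟨⟨hab, hb⟩, hb'⟩

/-- A connecting orbit of `τ` leaves the external circle at its largest external point and enters
the internal circle at its smallest internal point: if it leaves at `a`, it has no point strictly
between `a` and `τ a`. Under this condition annular standardness becomes disc standardness. -/
def ExitsTight (τ : Equiv.Perm (Fin (p + q))) : Prop :=
  ∀ a ∈ extSet p q, τ a ∈ intSet p q → ∀ m, τ.SameCycle a m → m ∉ Set.Ioo a (τ a)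

theorem ExitsTight.isGreatest (hgap : ExitsTight τ) (hA : IsOrbit τ A)
    (he : e ∈ A ∩ extSet p q) (he' : τ e ∈ intSet p q) : IsGreatest (A ∩ extSet p q) e := by
  refine ⟨he, fun s hs => ?_⟩
  by_contra! hlt
  exact hgap e he.2 he' s ((hA.mem_iff he.1).1 hs.1) ⟨hlt, lt_of_mem_extSet_of_mem_intSet hs.2 he'⟩

theorem ExitsTight.isLeast (hgap : ExitsTight τ) (hA : IsOrbit τ A)
    (he : e ∈ A ∩ extSet p q) (he' : τ e ∈ intSet p q) : IsLeast (A ∩ intSet p q) (τ e) := by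
  refine ⟨⟨(hA.mem_iff he.1).2 ⟨1, by simp⟩, he'⟩, fun s hs => ?_⟩
  by_contra! hlt
  exact hgap e he.2 he' s ((hA.mem_iff he.1).1 hs.1)
    ⟨lt_of_mem_extSet_of_mem_intSet he.2 hs.2, hlt⟩

theorem ExitsTight.isGreatest_isLeast_of_entry (hgap : ExitsTight τ) (h : AnnStandard p q τ)
    (hA : IsOrbit τ A) (hd : d ∈ A ∩ intSet p q) (hd' : τ d ∈ extSet p q) :
    IsGreatest (A ∩ intSet p q) d ∧ IsLeast (A ∩ extSet p q) (τ d) := by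
  obtain ⟨e, heint, hde, heτ, hind_d⟩ := exists_induced_eq_apply_of_apply_notMem (τ := τ) hd
    fun hmem => mem_intSet_iff_notMem_extSet.1 hmem.2 hd'
  have heA : e ∈ A := (hA.mem_iff hd.1).2 hde
  have he : e ∈ A ∩ extSet p q :=
    ⟨heA, (mem_extSet_or_mem_intSet e).resolve_right fun hint => heint ⟨heA, hint⟩⟩
  have hgreatest : IsGreatest (A ∩ intSet p q) d :=
    (hind_d ▸ h.cyclicSucc_induced_int hA hd).isGreatest_of_isLeast (hgap.isLeast hA he heτ.2)
  obtain ⟨d', hd'ext, hed', hd'τ, hind_e⟩ := exists_induced_eq_apply_of_apply_notMem (τ := τ) he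
    fun hmem => mem_intSet_iff_notMem_extSet.1 heτ.2 hmem.2
  have hleast : IsLeast (A ∩ extSet p q) (τ d') :=
    (hind_e ▸ h.cyclicSucc_induced_ext hA he).isLeast_of_isGreatest (hgap.isGreatest hA he heτ.2)
  have hd'int : d' ∈ intSet p q :=
    (mem_extSet_or_mem_intSet d').resolve_left fun hext => hd'ext ⟨(hA.mem_iff heA).2 hed', hext⟩
  rw [h.entry_unique hd.2 hd' hd'int hd'τ.2 (hde.trans hed')] at hgreatest ⊢
  exact ⟨hgreatest, hleast⟩

theorem ExitsTight.cyclicSucc_of_ext_of_ext (hgap : ExitsTight τ) (h : AnnStandard p q τ)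
    (hA : IsOrbit τ A) (hb : b ∈ A ∩ extSet p q) (hb' : τ b ∈ extSet p q) :
    CyclicSucc A b (τ b) := by
  have hτb : τ b ∈ A ∩ extSet p q := ⟨(hA.mem_iff hb.1).2 ⟨1, by simp⟩, hb'⟩
  have hsucc := h.cyclicSucc_induced_ext hA hb
  rw [induced_eq_apply hτb] at hsucc
  rcases (A ∩ intSet p q).eq_empty_or_nonempty with hT | hT
  · rwa [Set.inter_eq_left.2 fun s hs => (mem_extSet_or_mem_intSet s).resolve_right fun hint =>
      hT.le ⟨hs, hint⟩] at hsucc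
  rcases hsucc with ⟨-, -, hlt, hbetween⟩ | ⟨hgreatest, -⟩
  · refine Or.inl ⟨hb.1, hτb.1, hlt, fun s hs => ?_⟩
    rcases mem_extSet_or_mem_intSet s with hsext | hsint
    · exact hbetween s ⟨hs, hsext⟩
    · exact Or.inr (lt_of_mem_extSet_of_mem_intSet hb' hsint).le
  · obtain ⟨e, he, he'⟩ := (h.2 A hA ⟨b, hb⟩ hT).1.exists
    rw [(hgap.isGreatest hA he he').unique hgreatest] at he'
    exact absurd hb' (mem_intSet_iff_notMem_extSet.1 he')

theorem ExitsTight.cyclicSucc_of_int_of_int (hgap : ExitsTight τ) (h : AnnStandard p q τ)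
    (hA : IsOrbit τ A) (hb : b ∈ A ∩ intSet p q) (hb' : τ b ∈ intSet p q) :
    CyclicSucc A b (τ b) := by
  have hτb : τ b ∈ A ∩ intSet p q := ⟨(hA.mem_iff hb.1).2 ⟨1, by simp⟩, hb'⟩
  have hsucc := h.cyclicSucc_induced_int hA hb
  rw [induced_eq_apply hτb] at hsucc
  rcases (A ∩ extSet p q).eq_empty_or_nonempty with hS | hS
  · rwa [Set.inter_eq_left.2 fun s hs => (mem_extSet_or_mem_intSet s).resolve_left fun hext =>
      hS.le ⟨hs, hext⟩] at hsucc
  rcases hsucc with ⟨-, -, hlt, hbetween⟩ | ⟨-, hleast⟩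
  · refine Or.inl ⟨hb.1, hτb.1, hlt, fun s hs => ?_⟩
    rcases mem_extSet_or_mem_intSet s with hsext | hsint
    · exact Or.inl (lt_of_mem_extSet_of_mem_intSet hsext hb.2).le
    · exact hbetween s ⟨hs, hsint⟩
  · obtain ⟨e, he, he'⟩ := (h.2 A hA hS ⟨b, hb⟩).1.exists
    rw [τ.injective ((hgap.isLeast hA he he').unique hleast)] at he
    exact absurd he.2 (mem_intSet_iff_notMem_extSet.1 hb.2)

theorem ExitsTight.cyclicSucc (hgap : ExitsTight τ) (h : AnnStandard p q τ) (hA : IsOrbit τ A)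
    (hb : b ∈ A) : CyclicSucc A b (τ b) := by
  have hτb : τ b ∈ A := (hA.mem_iff hb).2 ⟨1, by simp⟩
  rcases mem_extSet_or_mem_intSet b with hbext | hbint <;>
    rcases mem_extSet_or_mem_intSet (τ b) with hτext | hτint
  · exact hgap.cyclicSucc_of_ext_of_ext h hA ⟨hb, hbext⟩ hτext
  · refine Or.inl ⟨hb, hτb, lt_of_mem_extSet_of_mem_intSet hbext hτint, fun s hs => ?_⟩
    by_contra! hs'
    exact hgap b hbext hτint s ((hA.mem_iff hb).1 hs) hs'
  · obtain ⟨hgreatest, hleast⟩ := hgap.isGreatest_isLeast_of_entry h hA ⟨hb, hbint⟩ hτext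
    refine Or.inr ⟨⟨hb, fun s hs => ?_⟩, ⟨hτb, fun s hs => ?_⟩⟩ <;>
      rcases mem_extSet_or_mem_intSet s with hsext | hsint
    · exact (lt_of_mem_extSet_of_mem_intSet hsext hbint).le
    · exact hgreatest.2 ⟨hs, hsint⟩
    · exact hleast.2 ⟨hs, hsext⟩
    · exact (lt_of_mem_extSet_of_mem_intSet hτext hsint).le
  · exact hgap.cyclicSucc_of_int_of_int h hA ⟨hb, hbint⟩ hτint

theorem ExitsTight.discStandardRel (hgap : ExitsTight τ) (h : AnnStandard p q τ) :
    DiscStandardRel (finRotate (p + q)) τ := by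
  intro A hA b hb
  have hτb : τ b ∈ A := (hA.mem_iff hb).2 ⟨1, by simp⟩
  rw [induced_eq_apply hτb, finRotate_eq_formPerm_finRange]
  exact (hgap.cyclicSucc h hA hb).unique
    (cyclicSucc_induced_formPerm (List.pairwise_lt_finRange _) (fun x _ => List.mem_finRange x) hb)

end Standard

section AdjacentExit

variable {τ : Equiv.Perm (Fin (p + q))} {P Q a u v w z : Fin (p + q)}

theorem exists_extList_eq_append (hP : IsGreatest (extSet p q) P) :
    ∃ s, extList p q = s ++ [P] := by
  obtain ⟨s, t, hst⟩ := List.append_of_mem (mem_extList.2 hP.1)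
  have ht : t = [] := List.eq_nil_iff_forall_not_mem.2 fun z hz => by
    have hzl : z ∈ s ++ P :: t := by simp [hz]
    have hPz := (mem_right_iff_lt_of_pairwise_lt (hst ▸ pairwise_lt_extList) hzl).1 hz
    exact hPz.not_ge (hP.2 (mem_extList.1 (hst ▸ hzl)))
  exact ⟨s, ht ▸ hst⟩

theorem exists_intList_eq_cons (hQ : IsLeast (intSet p q) Q) : ∃ t, intList p q = Q :: t := by
  obtain ⟨s, t, hst⟩ := List.append_of_mem (mem_intList.2 hQ.1)
  have hs : s = [] := List.eq_nil_iff_forall_not_mem.2 fun z hz => by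
    have hzl : z ∈ s ++ Q :: t := by simp [hz]
    have hzQ := (mem_left_iff_lt_of_pairwise_lt (hst ▸ pairwise_lt_intList) hzl).1 hz
    exact hzQ.not_ge (hQ.2 (mem_intList.1 (hst ▸ hzl)))
  exact ⟨t, by simpa [hs] using hst⟩

theorem sublist_lamList_of_pairwise_lt (hP : IsGreatest (extSet p q) P)
    (hQ : IsLeast (intSet p q) Q) (hl : l.Pairwise (· < ·)) (hPl : P ∉ l) (hQl : Q ∉ l) :
    l.Sublist (lamList p q P Q) := by
  obtain ⟨s, hs⟩ := exists_extList_eq_append hP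
  obtain ⟨t, ht⟩ := exists_intList_eq_cons hQ
  have hlam : lamList p q P Q = s ++ t := by simpa using lamList_eq hs (s' := []) ht
  have hfin : List.finRange (p + q) = s ++ [P] ++ Q :: t := by
    rw [← extList_append_intList, hs, ht]
  have hsub : (s ++ t).Sublist (List.finRange (p + q)) := by simp [hfin]
  rw [hlam]
  refine sublist_of_subset_of_pairwise_lt hl ((List.pairwise_lt_finRange _).sublist hsub)
    fun z hz => ?_
  have hzfin := hfin ▸ List.mem_finRange z
  grind

theorem sublist_lamList_of_notMem_Icc (hx : x ∈ extSet p q) (hy : y ∈ intSet p q)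
    (ha : a ∈ extSet p q) (hb : b ∈ intSet p q) (hxa : x < a) (hby : b < y)
    (hz : z ∉ Set.Icc x y) : [a, z, b].Sublist (lamList p q x y) := by
  obtain ⟨s, t, hs⟩ := List.append_of_mem (mem_extList.2 hx)
  obtain ⟨s', t', hs'⟩ := List.append_of_mem (mem_intList.2 hy)
  have hmem_ext : ∀ r ∈ extSet p q, r ∈ s ++ x :: t := fun r hr => hs ▸ mem_extList.2 hr
  have hmem_int : ∀ r ∈ intSet p q, r ∈ s' ++ y :: t' := fun r hr => hs' ▸ mem_intList.2 hr
  have hlt_ext : (s ++ x :: t).Pairwise (· < ·) := hs ▸ pairwise_lt_extList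
  have hlt_int : (s' ++ y :: t').Pairwise (· < ·) := hs' ▸ pairwise_lt_intList
  have hat : a ∈ t := (mem_right_iff_lt_of_pairwise_lt hlt_ext (hmem_ext a ha)).2 hxa
  have hbs' : b ∈ s' := (mem_left_iff_lt_of_pairwise_lt hlt_int (hmem_int b hb)).2 hby
  have hzst' : z ∈ s ++ t' := by
    rcases mem_extSet_or_mem_intSet z with hzext | hzint
    · have hzx : z < x := not_le.1 fun hxz =>
        hz ⟨hxz, (lt_of_mem_extSet_of_mem_intSet hzext hy).le⟩
      exact List.mem_append_left _
        ((mem_left_iff_lt_of_pairwise_lt hlt_ext (hmem_ext z hzext)).2 hzx)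
    · have hyz : y < z := not_le.1 fun hzy =>
        hz ⟨(lt_of_mem_extSet_of_mem_intSet hx hzint).le, hzy⟩
      exact List.mem_append_right _
        ((mem_right_iff_lt_of_pairwise_lt hlt_int (hmem_int z hzint)).2 hyz)
  have hsub := ((List.singleton_sublist.2 hat).append (List.singleton_sublist.2 hzst')).append
    (List.singleton_sublist.2 hbs')
  simpa [lamList_eq hs hs'] using hsub

theorem AnnNC.exitsTight (h : AnnNC p q τ) (hP : IsGreatest (extSet p q) P)
    (hQ : IsLeast (intSet p q) Q) (hτ : τ P = Q) : ExitsTight τ := by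
  rintro a ha ha' m ham ⟨ham_lt, hma_lt⟩
  have hPQ : τ.SameCycle P Q := ⟨1, by simpa using hτ⟩
  by_cases hPa : τ.SameCycle P a
  · obtain rfl : P = a := h.1.exit_unique hP.1 (hτ ▸ hQ.1) ha ha' hPa
    rcases mem_extSet_or_mem_intSet m with hm | hm
    · exact ham_lt.not_ge (hP.2 hm)
    · exact (hτ ▸ hma_lt).not_ge (hQ.2 hm)
  · have haa' : τ.SameCycle a (τ a) := ⟨1, by simp⟩
    have hsub : [a, m, τ a].Sublist (lamList p q P Q) := by
      refine sublist_lamList_of_pairwise_lt hP hQ (by grind) ?_ ?_ <;>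
        simp only [sameCycle_iff_quotientMk_eq] at * <;> grind
    exact h.2.2.1 (AC2.of_sublist hP.1 hQ.1 hsub hPQ ham rfl hPa)

theorem AnnNC.mem_Icc_of_separates (h : AnnNC p q τ) (hP : IsGreatest (extSet p q) P)
    (hQ : IsLeast (intSet p q) Q) (hτ : τ P = Q) (hPu : ¬ τ.SameCycle P u)
    (huv : τ.SameCycle u v) (hPw : τ.SameCycle P w) (hPz : τ.SameCycle P z) (huw : u < w)
    (hwv : w < v) : z ∈ Set.Icc u v := by
  have hPQ : τ.SameCycle P Q := ⟨1, by simpa using hτ⟩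
  have hPv : ¬ τ.SameCycle P v := fun hPv => hPu (hPv.trans huv.symm)
  have hlt_P : ∀ y ∈ extSet p q, ¬ τ.SameCycle P y → y < P := fun y hy hPy =>
    (hP.2 hy).lt_of_ne fun hyP => hPy (hyP ▸ Equiv.Perm.SameCycle.refl τ P)
  have hQ_lt : ∀ y ∈ intSet p q, ¬ τ.SameCycle P y → Q < y := fun y hy hPy =>
    (hQ.2 hy).lt_of_ne fun hQy => hPy (hQy ▸ hPQ)
  by_contra hz
  rcases mem_extSet_or_mem_intSet v with hv | hv
  · exact h.2.1 (AC1.of_lt (Or.inl hP.1) huw hwv (hlt_P v hv hPv) huv hPw.symm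
      fun huw => hPu (hPw.trans huw.symm))
  rcases mem_extSet_or_mem_intSet u with hu | hu
  · have hsub := sublist_lamList_of_notMem_Icc hu hv hP.1 hQ.1 (hlt_P u hu hPu) (hQ_lt v hv hPv) hz
    exact h.2.2.1 (AC2.of_sublist hu hv hsub huv hPz hτ fun huP => hPu huP.symm)
  · exact h.2.1 (AC1.of_lt (Or.inr hQ.1) (hQ_lt u hu hPu) huw hwv (hPQ.symm.trans hPw) huv
      fun hQu => hPu (hPQ.trans hQu))

theorem AnnNC.orbitsNoCrossing (h : AnnNC p q τ) (hP : IsGreatest (extSet p q) P)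
    (hQ : IsLeast (intSet p q) Q) (hτ : τ P = Q) : OrbitsNoCrossing τ := by
  rintro ⟨a, b, c, d, hab_lt, hbc_lt, hcd_lt, hac, hbd, hab⟩
  have hPQ : τ.SameCycle P Q := ⟨1, by simpa using hτ⟩
  by_cases hPa : τ.SameCycle P a
  · have hPb : ¬ τ.SameCycle P b := fun hPb => hab (hPa.symm.trans hPb)
    exact hab_lt.not_ge
      (h.mem_Icc_of_separates hP hQ hτ hPb hbd (hPa.trans hac) hPa hbc_lt hcd_lt).1
  by_cases hPb : τ.SameCycle P b
  · exact hcd_lt.not_ge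
      (h.mem_Icc_of_separates hP hQ hτ hPa hac hPb (hPb.trans hbd) hab_lt hbc_lt).2
  · have hsub : [a, b, c, d].Sublist (lamList p q P Q) := by
      refine sublist_lamList_of_pairwise_lt hP hQ (by grind) ?_ ?_ <;>
        simp only [sameCycle_iff_quotientMk_eq] at * <;> grind
    exact h.2.2.2 (AC3.of_sublist hP.1 hQ.1 hsub hPQ hac hbd hab hPa hPb)

end AdjacentExit
end Annulus

/-- Lemma 5.2 3°: if `τ ∈ S_ann-nc(p,q)` and `τ(p) = p+1` (in 0-indexed terms,
`τ(p-1) = p`), then `τ ∈ S_disc-nc(p+q)`. -/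
theorem stmt_14 (p q : ℕ) (hp : 0 < p) (hq : 0 < q)
    (τ : Equiv.Perm (Fin (p + q))) (h : AnnNC p q τ)
    (hτ : τ ⟨p - 1, by omega⟩ = ⟨p, by omega⟩) :
    DiscNC τ := by
  have hP : IsGreatest (extSet p q) ⟨p - 1, by omega⟩ :=
    ⟨Nat.sub_one_lt_of_lt hp, fun _ hx => Fin.le_def.2 (Nat.le_sub_one_of_lt hx)⟩
  have hQ : IsLeast (intSet p q) ⟨p, by omega⟩ :=
    ⟨Nat.le_refl p, fun _ hx => Fin.le_def.2 hx⟩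
  exact ⟨(h.exitsTight hP hQ hτ).discStandardRel h.1, h.orbitsNoCrossing hP hQ hτ⟩
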